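/- arXiv:1706.07683 — 2 statements merged into one kernel-verified Lean document; each statement's English description precedes it below -/
import Mathlib

section
/- Let G be a group generated by a subset X and let q ≥ 1. Then the q-tensor square G ⊗^q G is generated by the set {g ⊗ h : g, h ∈ G} ∪ {x̂ : x ∈ X}; in particular, for every k ∈ G the element k̂ lies in the subgroup generated by all tensors g ⊗ h together with the elements x̂ with x ∈ X. -/
/-!
Let `H` be the subgroup generated by the tensors and the `x̂` with `x ∈ X`. Relation (4) says that
`(kk₁)^ = k̂ · p · k̂₁` with `p` a product of tensors, so `p ∈ H`. Hence the set of `k` with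
`k̂ ∈ H` is closed under products. Taking `k = k₁ = 1` gives `1̂ = p⁻¹ ∈ H`, and taking
`k₁ = k⁻¹` then shows closure under inverses. It is therefore a subgroup of `G` containing `X`,
that is, all of `G`; so `H` contains every generator of `G ⊗^q G`. The key lemma is
`exists_hat_mul`.
-/

/-- The defining relators of Ellis's `q`-tensor square `G ⊗^q G`: one generator `g ⊗ h` for
each pair `(g,h) ∈ G × G` (type `Sum.inl`) and one generator `k̂` for each `k ∈ G`
(type `Sum.inr`), with relators corresponding to the relations (1)–(6), where `y^x = x⁻¹yx`
and `[x,y] = x⁻¹y⁻¹xy`. -/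
def qTensorRels (G : Type*) [Group G] (q : ℕ) : Set (FreeGroup ((G × G) ⊕ G)) :=
  -- (1) `g ⊗ hh₁ = (g ⊗ h)(g^{h₁} ⊗ h^{h₁})`
  {w | ∃ g h h₁ : G, w = FreeGroup.of (Sum.inl (g, h * h₁)) *
        (FreeGroup.of (Sum.inl (g, h)) *
          FreeGroup.of (Sum.inl (h₁⁻¹ * g * h₁, h₁⁻¹ * h * h₁)))⁻¹} ∪
  -- (2) `gg₁ ⊗ h = (g^{g₁} ⊗ h^{g₁})(g₁ ⊗ h)`
  {w | ∃ g g₁ h : G, w = FreeGroup.of (Sum.inl (g * g₁, h)) *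
        (FreeGroup.of (Sum.inl (g₁⁻¹ * g * g₁, g₁⁻¹ * h * g₁)) *
          FreeGroup.of (Sum.inl (g₁, h)))⁻¹} ∪
  -- (3) `k̂⁻¹ (g ⊗ h) k̂ = g^{k^q} ⊗ h^{k^q}`
  {w | ∃ g h k : G, w = (FreeGroup.of (Sum.inr k))⁻¹ * FreeGroup.of (Sum.inl (g, h)) *
        FreeGroup.of (Sum.inr k) *
        (FreeGroup.of (Sum.inl ((k ^ q)⁻¹ * g * k ^ q, (k ^ q)⁻¹ * h * k ^ q)))⁻¹} ∪
  -- (4) `(kk₁)^ = k̂ ⬝ (∏_{i=1}^{q-1} (k ⊗ (k₁^{-i})^{k^{q-1-i}})) ⬝ k̂₁`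
  {w | ∃ k k₁ : G, w = FreeGroup.of (Sum.inr (k * k₁)) *
        (FreeGroup.of (Sum.inr k) *
          ((List.range (q - 1)).map (fun j => FreeGroup.of (Sum.inl (k,
            (k ^ (q - 1 - (j + 1)))⁻¹ * (k₁ ^ (j + 1))⁻¹ * k ^ (q - 1 - (j + 1)))))).prod *
          FreeGroup.of (Sum.inr k₁))⁻¹} ∪
  -- (5) `[k̂, k̂₁] = k^q ⊗ k₁^q`
  {w | ∃ k k₁ : G, w = (FreeGroup.of (Sum.inr k))⁻¹ * (FreeGroup.of (Sum.inr k₁))⁻¹ *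
        FreeGroup.of (Sum.inr k) * FreeGroup.of (Sum.inr k₁) *
        (FreeGroup.of (Sum.inl (k ^ q, k₁ ^ q)))⁻¹} ∪
  -- (6) `([g,h])^ = (g ⊗ h)^q`
  {w | ∃ g h : G, w = FreeGroup.of (Sum.inr (g⁻¹ * h⁻¹ * g * h)) *
        (FreeGroup.of (Sum.inl (g, h)) ^ q)⁻¹}

/-- Ellis's `q`-tensor square `G ⊗^q G`, as a presented group. -/
abbrev QTensorSq (G : Type*) [Group G] (q : ℕ) : Type _ := PresentedGroup (qTensorRels G q)

/-- The part of relation (4) that the argument uses: `(kk₁)^` equals `k̂ · p · k̂₁` for some `p` in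
any given subgroup `H` containing all tensors. -/
theorem exists_hat_mul {G : Type*} [Group G] {q : ℕ} {H : Subgroup (QTensorSq G q)}
    (hH : ∀ g h : G, (PresentedGroup.of (Sum.inl (g, h)) : QTensorSq G q) ∈ H) (k k₁ : G) :
    ∃ p ∈ H, (PresentedGroup.of (Sum.inr (k * k₁)) : QTensorSq G q) =
      PresentedGroup.of (Sum.inr k) * p * PresentedGroup.of (Sum.inr k₁) := by
  refine ⟨((List.range (q - 1)).map (fun j => (PresentedGroup.of (Sum.inl (k,
    (k ^ (q - 1 - (j + 1)))⁻¹ * (k₁ ^ (j + 1))⁻¹ * k ^ (q - 1 - (j + 1)))) :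
      QTensorSq G q))).prod, ?_, ?_⟩
  · refine Subgroup.list_prod_mem _ fun x hx => ?_
    obtain ⟨j, -, rfl⟩ := List.mem_map.1 hx
    exact hH _ _
  · have hrel : FreeGroup.of (Sum.inr (k * k₁)) *
        (FreeGroup.of (Sum.inr k) *
          ((List.range (q - 1)).map (fun j => FreeGroup.of (Sum.inl (k,
            (k ^ (q - 1 - (j + 1)))⁻¹ * (k₁ ^ (j + 1))⁻¹ * k ^ (q - 1 - (j + 1)))))).prod *
          FreeGroup.of (Sum.inr k₁))⁻¹ ∈ qTensorRels G q :=
      Or.inl (Or.inl (Or.inr ⟨k, k₁, rfl⟩))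
    have h := PresentedGroup.one_of_mem hrel
    rw [map_mul, map_inv, mul_inv_eq_one, map_mul, map_mul, map_list_prod, List.map_map] at h
    exact h

/-- Proposition of Section 6: if `G` is generated by `X` and `q ≥ 1`, then
`G ⊗^q G` is generated by the tensors `g ⊗ h` (`g, h ∈ G`) together with the elements
`x̂` for `x ∈ X`; in particular every `k̂` (`k ∈ G`) lies in this subgroup. -/
theorem qTensorSq_generated_by_tensors_and_generator_hats {G : Type*} [Group G]
    (X : Set G) (hX : Subgroup.closure X = ⊤) (q : ℕ) (hq : 1 ≤ q) :
    Subgroup.closure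
        ({w : QTensorSq G q | ∃ g h : G, w = PresentedGroup.of (Sum.inl (g, h))} ∪
          {w : QTensorSq G q | ∃ x ∈ X, w = PresentedGroup.of (Sum.inr x)}) = ⊤ ∧
    ∀ k : G, PresentedGroup.of (Sum.inr k) ∈
      Subgroup.closure
        ({w : QTensorSq G q | ∃ g h : G, w = PresentedGroup.of (Sum.inl (g, h))} ∪
          {w : QTensorSq G q | ∃ x ∈ X, w = PresentedGroup.of (Sum.inr x)}) := by
  set H := Subgroup.closure
    ({w : QTensorSq G q | ∃ g h : G, w = PresentedGroup.of (Sum.inl (g, h))} ∪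
      {w : QTensorSq G q | ∃ x ∈ X, w = PresentedGroup.of (Sum.inr x)}) with hHdef
  have hT : ∀ g h : G, (PresentedGroup.of (Sum.inl (g, h)) : QTensorSq G q) ∈ H :=
    fun g h => Subgroup.subset_closure (Or.inl ⟨g, h, rfl⟩)
  have hone : (PresentedGroup.of (Sum.inr 1) : QTensorSq G q) ∈ H := by
    obtain ⟨p, hp, h⟩ := exists_hat_mul hT 1 1
    -- `1̂ = 1̂ · p · 1̂` forces `p · 1̂ = 1`.
    rw [mul_one, mul_assoc, left_eq_mul] at h
    rw [eq_inv_of_mul_eq_one_right h]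
    exact H.inv_mem hp
  have hhat : ∀ k : G, (PresentedGroup.of (Sum.inr k) : QTensorSq G q) ∈ H := by
    intro k
    have hk : k ∈ Subgroup.closure X := hX ▸ Subgroup.mem_top k
    induction hk using Subgroup.closure_induction with
    | mem x hx => exact Subgroup.subset_closure (Or.inr ⟨x, hx, rfl⟩)
    | one => exact hone
    | mul a b _ _ ha hb =>
      obtain ⟨p, hp, h⟩ := exists_hat_mul hT a b
      rw [h]
      exact H.mul_mem (H.mul_mem ha hp) hb
    | inv a _ ha =>
      obtain ⟨p, hp, h⟩ := exists_hat_mul hT a a⁻¹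
      rw [mul_inv_cancel] at h
      exact (H.mul_mem_cancel_left (H.mul_mem ha hp)).1 (h ▸ hone)
  refine ⟨?_, hhat⟩
  rw [eq_top_iff, ← PresentedGroup.closure_range_of, Subgroup.closure_le]
  rintro _ ⟨⟨g, h⟩ | k, rfl⟩
  · exact hT g h
  · exact hhat k
end

section
/- Let Q be the presented group on two generators a, b with relators a⁴, a⁻¹bab, b³ (i.e., Q = ⟨a, b | a⁴ = 1, a⁻¹ba = b⁻¹, b³ = 1⟩). Then the center Z(Q) is the subgroup generated by the image of a², it has order 2, every element z ∈ Z(Q) satisfies z² = 1 (so Z(Q) = Z₂(Q)), and the quotient Q/Z(Q) is isomorphic to the symmetric group S₃. -/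
/-!
The assignment `a ↦ (0 1)`, `b ↦ (0 1 2)` defines a surjection `QGrp.toPerm : Q → S₃`, and the
center of `Q` is its kernel. Indeed the center is mapped into the trivial center of `S₃`.
Conversely, `ba = ab²` lets every element be written as `aⁱbʲ` with `i < 4`, `j < 3`
(`QGrp.exists_normal_form`), and inspecting these twelve words leaves only `1` and `a²` in the
kernel; `a²` commutes with both generators. Finally `a² ≠ 1`, because `a` is mapped to a generator
under the homomorphism `Q → ℤ/4` that kills `b`. The isomorphism `Q/Z(Q) ≅ S₃` is then the first
isomorphism theorem.
-/

/-- The relators `a⁴, a⁻¹bab, b³` of the group `Q = ⟨a, b ∣ a⁴ = 1, a⁻¹ba = b⁻¹, b³ = 1⟩`,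
where `a` is the first and `b` the second free generator. -/
def QRels : Set (FreeGroup (Fin 2)) :=
  {(FreeGroup.of 0) ^ 4,
   (FreeGroup.of 0)⁻¹ * FreeGroup.of 1 * FreeGroup.of 0 * FreeGroup.of 1,
   (FreeGroup.of 1) ^ 3}

/-- `Q = ⟨a, b ∣ a⁴ = 1, a⁻¹ba = b⁻¹, b³ = 1⟩`. -/
abbrev QGrp : Type := PresentedGroup QRels

namespace QGrp

/-- The generator `a` of `Q`. -/
abbrev a : QGrp := PresentedGroup.of 0

/-- The generator `b` of `Q`. -/
abbrev b : QGrp := PresentedGroup.of 1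

lemma a_pow_four : a ^ 4 = 1 :=
  PresentedGroup.one_of_mem (rels := QRels) (x := FreeGroup.of 0 ^ 4) (by simp [QRels])

lemma b_pow_three : b ^ 3 = 1 :=
  PresentedGroup.one_of_mem (rels := QRels) (x := FreeGroup.of 1 ^ 3) (by simp [QRels])

lemma conj_rel : a⁻¹ * b * a * b = 1 :=
  PresentedGroup.one_of_mem (rels := QRels)
    (x := (FreeGroup.of 0)⁻¹ * FreeGroup.of 1 * FreeGroup.of 0 * FreeGroup.of 1)
    (by simp [QRels])

lemma b_inv : b⁻¹ = b ^ 2 :=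
  inv_eq_of_mul_eq_one_right (by rw [← pow_succ', b_pow_three])

lemma a_inv : a⁻¹ = a ^ 3 :=
  inv_eq_of_mul_eq_one_right (by rw [← pow_succ', a_pow_four])

lemma b_mul_a : b * a = a * b ^ 2 := by
  rw [← b_inv, ← inv_mul_eq_iff_eq_mul, ← mul_assoc]
  exact eq_inv_of_mul_eq_one_left conj_rel

lemma b_pow_mul_a (n : ℕ) : b ^ n * a = a * b ^ (2 * n) := by
  have h : SemiconjBy a (b ^ 2) b := b_mul_a.symm
  rw [pow_mul]
  exact (h.pow_right n).symm

lemma b_mul_a_pow (i : ℕ) : b * a ^ i = a ^ i * b ^ (2 ^ i) := by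
  induction i with
  | zero => simp
  | succ i ih => rw [pow_succ, ← mul_assoc, ih, mul_assoc, b_pow_mul_a, ← mul_assoc, pow_succ' 2 i]

lemma exists_pow_mul_pow (x : QGrp) : ∃ i j : ℕ, x = a ^ i * b ^ j := by
  have hA : ∀ y : QGrp, (∃ i j : ℕ, y = a ^ i * b ^ j) → ∃ i j : ℕ, a * y = a ^ i * b ^ j := by
    rintro _ ⟨i, j, rfl⟩
    exact ⟨i + 1, j, by rw [pow_succ', mul_assoc]⟩
  have hB : ∀ y : QGrp, (∃ i j : ℕ, y = a ^ i * b ^ j) → ∃ i j : ℕ, b * y = a ^ i * b ^ j := by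
    rintro _ ⟨i, j, rfl⟩
    exact ⟨i, 2 ^ i + j, by rw [← mul_assoc, b_mul_a_pow, mul_assoc, pow_add]⟩
  have hx : x ∈ Subgroup.closure (Set.range (PresentedGroup.of (rels := QRels))) := by
    rw [PresentedGroup.closure_range_of]
    trivial
  induction hx using Subgroup.closure_induction_left with
  | one => exact ⟨0, 0, by simp⟩
  | mul_left g hg y _ ih =>
    obtain ⟨k, rfl⟩ := hg
    fin_cases k
    · exact hA _ ih
    · exact hB _ ih
  | inv_mul_cancel g hg y _ ih =>
    obtain ⟨k, rfl⟩ := hg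
    fin_cases k
    · change ∃ i j : ℕ, a⁻¹ * y = a ^ i * b ^ j
      rw [a_inv, pow_succ', pow_two, mul_assoc, mul_assoc]
      exact hA _ (hA _ (hA _ ih))
    · change ∃ i j : ℕ, b⁻¹ * y = a ^ i * b ^ j
      rw [b_inv, pow_two, mul_assoc]
      exact hB _ (hB _ ih)

lemma exists_normal_form (x : QGrp) : ∃ (i : Fin 4) (j : Fin 3), x = a ^ (i : ℕ) * b ^ (j : ℕ) := by
  obtain ⟨i, j, rfl⟩ := exists_pow_mul_pow x
  refine ⟨⟨i % 4, Nat.mod_lt _ (by norm_num)⟩, ⟨j % 3, Nat.mod_lt _ (by norm_num)⟩, ?_⟩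
  rw [pow_eq_pow_mod i a_pow_four, pow_eq_pow_mod j b_pow_three]

/-- The homomorphism `Q → S₃` with `a ↦ (0 1)` and `b ↦ (0 1 2)`. -/
def toPerm : QGrp →* Equiv.Perm (Fin 3) :=
  PresentedGroup.toGroup (f := ![Equiv.swap 0 1, finRotate 3]) (by
    rintro r (rfl | rfl | rfl)
    all_goals
      simp only [map_mul, map_pow, map_inv, FreeGroup.lift_apply_of]
      decide)

/-- The homomorphism from `Q` to the cyclic group of order 4 with `a ↦ 1` (additively), `b ↦ 0`. -/
def toZMod : QGrp →* Multiplicative (ZMod 4) :=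
  PresentedGroup.toGroup (f := ![Multiplicative.ofAdd 1, 1]) (by
    rintro r (rfl | rfl | rfl)
    all_goals
      simp only [map_mul, map_pow, map_inv, FreeGroup.lift_apply_of]
      decide)

lemma toPerm_a : toPerm a = Equiv.swap 0 1 := PresentedGroup.toGroup.of _

lemma toPerm_b : toPerm b = finRotate 3 := PresentedGroup.toGroup.of _

lemma toZMod_a : toZMod a = Multiplicative.ofAdd 1 := PresentedGroup.toGroup.of _

lemma a_sq_ne_one : a ^ 2 ≠ 1 := by
  intro h
  have h' := congrArg toZMod h
  rw [map_pow, map_one, toZMod_a] at h'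
  exact absurd h' (by decide)

lemma toPerm_surjective : Function.Surjective toPerm := by
  have key : ∀ σ : Equiv.Perm (Fin 3), ∃ (i : Fin 4) (j : Fin 3),
      Equiv.swap 0 1 ^ (i : ℕ) * finRotate 3 ^ (j : ℕ) = σ := by decide
  intro σ
  obtain ⟨i, j, h⟩ := key σ
  exact ⟨a ^ (i : ℕ) * b ^ (j : ℕ), by rw [map_mul, map_pow, map_pow, toPerm_a, toPerm_b, h]⟩

lemma eq_one_or_of_mem_ker {x : QGrp} (hx : x ∈ toPerm.ker) : x = 1 ∨ x = a ^ 2 := by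
  have key : ∀ (i : Fin 4) (j : Fin 3),
      Equiv.swap 0 1 ^ (i : ℕ) * finRotate 3 ^ (j : ℕ) = (1 : Equiv.Perm (Fin 3)) →
        (i = 0 ∨ i = 2) ∧ j = 0 := by decide
  obtain ⟨i, j, rfl⟩ := exists_normal_form x
  rw [MonoidHom.mem_ker, map_mul, map_pow, map_pow, toPerm_a, toPerm_b] at hx
  obtain ⟨rfl | rfl, rfl⟩ := key i j hx
  · left; simp
  · right; simp

lemma a_sq_mem_center : a ^ 2 ∈ Subgroup.center QGrp := by
  -- `b a² = a² b⁴ = a² b`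
  have hb : b * a ^ 2 = a ^ 2 * b := by
    rw [b_mul_a_pow, show 2 ^ 2 = 3 + 1 from rfl, pow_succ b, b_pow_three, one_mul]
  rw [Subgroup.mem_center_iff]
  intro x
  obtain ⟨i, j, rfl⟩ := exists_pow_mul_pow x
  have h1 : Commute (a ^ i) (a ^ 2) := (Commute.refl a).pow_pow i 2
  have h2 : Commute (b ^ j) (a ^ 2) := Commute.pow_left hb j
  exact h1.mul_left h2

lemma center_eq_ker : Subgroup.center QGrp = toPerm.ker := by
  apply le_antisymm
  · have key : ∀ σ : Equiv.Perm (Fin 3), (∀ τ, τ * σ = σ * τ) → σ = 1 := by decide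
    intro z hz
    refine key _ fun τ => ?_
    obtain ⟨y, rfl⟩ := toPerm_surjective τ
    rw [← map_mul, ← map_mul, Subgroup.mem_center_iff.1 hz y]
  · intro x hx
    rcases eq_one_or_of_mem_ker hx with rfl | rfl
    · exact one_mem _
    · exact a_sq_mem_center

lemma mem_center_iff {x : QGrp} : x ∈ Subgroup.center QGrp ↔ x = 1 ∨ x = a ^ 2 := by
  constructor
  · intro hx
    exact eq_one_or_of_mem_ker (center_eq_ker ▸ hx)
  · rintro (rfl | rfl)
    · exact one_mem _
    · exact a_sq_mem_center

end QGrp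

/-- the center of `Q = ⟨a, b ∣ a⁴ = 1, a⁻¹ba = b⁻¹, b³ = 1⟩` is the subgroup
generated by the image of `a²`, it has order 2, every central element `z` satisfies `z² = 1`
(so `Z(Q) = Z₂(Q)`), and `Q/Z(Q) ≅ S₃`.  This is the witness showing `S₃` is 2-capable. -/
theorem center_QGrp :
    Subgroup.center QGrp = Subgroup.closure {(PresentedGroup.of (0 : Fin 2)) ^ 2} ∧
    Nat.card (Subgroup.center QGrp) = 2 ∧
    (∀ z ∈ Subgroup.center QGrp, z ^ 2 = 1) ∧
    Nonempty ((QGrp ⧸ Subgroup.center QGrp) ≃* Equiv.Perm (Fin 3)) := by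
  refine ⟨?_, ?_, ?_, ?_⟩
  · apply le_antisymm
    · intro x hx
      rcases QGrp.mem_center_iff.1 hx with rfl | rfl
      · exact one_mem _
      · exact Subgroup.subset_closure rfl
    · rw [Subgroup.closure_le, Set.singleton_subset_iff]
      exact QGrp.a_sq_mem_center
  · have h : (Subgroup.center QGrp : Set QGrp) = {1, QGrp.a ^ 2} := by
      ext x
      exact QGrp.mem_center_iff
    have hc := Set.ncard_pair QGrp.a_sq_ne_one.symm
    rwa [← h] at hc
  · intro z hz
    rcases QGrp.mem_center_iff.1 hz with rfl | rfl
    · exact one_pow 2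
    · rw [← pow_mul]
      exact QGrp.a_pow_four
  · exact ⟨(QuotientGroup.quotientMulEquivOfEq QGrp.center_eq_ker).trans
      (QuotientGroup.quotientKerEquivOfSurjective QGrp.toPerm QGrp.toPerm_surjective)⟩
end
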